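/- Let U ⊂ ℝ⁸ be a Cayley subspace, i.e. a 4-dimensional subspace admitting an orthonormal basis (u₀,u₁,u₂,u₃) with Φ(u₀,u₁,u₂,u₃) = 1; orient U by this basis and identify Λ²U* = {α ∈ Λ²(ℝ⁸)* : i(v)α = 0 for all v ∈ U^⊥}. Then a 2-form α ∈ Λ²U* is anti-self-dual on U (with respect to the induced metric and this orientation) if and only if π²₇(α) = 0. -/

import Mathlib

open scoped BigOperators

noncomputable section

namespace FMpaper

variable {K : Type*} [NormedField K] [NormedAlgebra ℝ K]

/-- Coefficient model for the exterior algebra of `(ℝⁿ)*` with scalars in `K`: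
a form is given by its coefficients on the basis `e^S`, `S ⊆ {0, …, n-1}` sorted. -/
abbrev Form (K : Type*) (n : ℕ) := Finset (Fin n) → K

variable {n : ℕ}

/-- Sign such that `e^s ∧ e^t = signMerge s t • e^(s ∪ t)` for disjoint sorted `s, t`. -/
def signMerge (s t : Finset (Fin n)) : K :=
  (-1 : K) ^ (((s ×ˢ t).filter (fun p => p.2 < p.1)).card)

/-- Wedge product. -/
def wedge (α β : Form K n) : Form K n :=
  fun u => ∑ s ∈ u.powerset, signMerge s (u \ s) * α s * β (u \ s)

/-- Hodge star operator (for the standard inner product and orientation `e^{0⋯(n-1)}`). -/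
def hstar (α : Form K n) : Form K n :=
  fun t => signMerge tᶜ t * α tᶜ

/-- Interior product with the basis vector `e_μ`. -/
def iprodB (μ : Fin n) (α : Form K n) : Form K n :=
  fun t => if μ ∈ t then 0
    else (-1 : K) ^ ((t.filter (fun j => j < μ)).card) * α (insert μ t)

/-- Interior product with the vector `v`. -/
def iprod (v : Fin n → K) (α : Form K n) : Form K n :=
  fun t => ∑ μ, v μ * iprodB μ α t

/-- The basis covector `e^i` as a 1-form. -/
def e1 (i : Fin n) : Form K n := fun s => if s = {i} then 1 else 0

/-- The covector `v♭` dual to a vector `v`. -/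
def flat (v : Fin n → K) : Form K n := ∑ i, v i • e1 i

/-- The vector `α♯` dual to a 1-form `α`. -/
def sharp1 (α : Form K n) : Fin n → K := fun i => α {i}

/-- The inner product of forms (extended `K`-bilinearly). -/
def inner' (α β : Form K n) : K := ∑ s, α s * β s

/-- The (Euclidean) norm of a form; for an `√-1 ℝ`-valued form `√-1 γ` this is `‖γ‖`. -/
def fnorm (α : Form K n) : ℝ := Real.sqrt (∑ s, ‖α s‖ ^ 2)

/-- `α` is homogeneous of degree `k`. -/
def isGrade (k : ℕ) (α : Form K n) : Prop := ∀ s, s.card ≠ k → α s = 0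

/-- Evaluation of a `k`-form on `k` vectors. -/
def evalForm {k : ℕ} (α : Form K n) (v : Fin k → (Fin n → K)) : K :=
  ∑ s : Finset (Fin n), α s *
    (if h : s.card = k then
      Matrix.det (Matrix.of fun i j => v i ((s.orderIsoOfFin h j : Fin n))) else 0)

/-- The matrix of the skew-symmetric endomorphism `γ♯` associated with a 2-form `γ`
via `⟨γ♯ u, v⟩ = γ(u, v)`. -/
def mat2 (γ : Form K n) : Matrix (Fin n) (Fin n) K :=
  Matrix.of fun i j => if i < j then γ {i, j} else if j < i then - γ {i, j} else 0

/-- The standard `G₂` 3-form `φ = e^{123}+e^{145}+e^{167}+e^{246}−e^{257}−e^{347}−e^{356}`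
on `ℝ⁷` (indices `1, …, 7` shifted to `0, …, 6`). -/
def phi7 : Form K 7 := fun s =>
  if s = ({0, 1, 2} : Finset (Fin 7)) then 1
  else if s = ({0, 3, 4} : Finset (Fin 7)) then 1
  else if s = ({0, 5, 6} : Finset (Fin 7)) then 1
  else if s = ({1, 3, 5} : Finset (Fin 7)) then 1
  else if s = ({1, 4, 6} : Finset (Fin 7)) then -1
  else if s = ({2, 3, 6} : Finset (Fin 7)) then -1
  else if s = ({2, 4, 5} : Finset (Fin 7)) then -1
  else 0

/-- `*₇φ = e^{4567}+e^{2367}+e^{2345}+e^{1357}−e^{1346}−e^{1256}−e^{1247}` on `ℝ⁷`. -/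
def psi7 : Form K 7 := fun s =>
  if s = ({3, 4, 5, 6} : Finset (Fin 7)) then 1
  else if s = ({1, 2, 5, 6} : Finset (Fin 7)) then 1
  else if s = ({1, 2, 3, 4} : Finset (Fin 7)) then 1
  else if s = ({0, 2, 4, 6} : Finset (Fin 7)) then 1
  else if s = ({0, 2, 3, 5} : Finset (Fin 7)) then -1
  else if s = ({0, 1, 4, 5} : Finset (Fin 7)) then -1
  else if s = ({0, 1, 3, 6} : Finset (Fin 7)) then -1
  else 0

/-- The `G₂` 3-form `φ` on `V = span{e₁, …, e₇} ⊂ ℝ⁸`, regarded as a form on `ℝ⁸`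
annihilated by `i(e₀)` (indices `1, …, 7` of `ℝ⁸`). -/
def phi8 : Form K 8 := fun s =>
  if s = ({1, 2, 3} : Finset (Fin 8)) then 1
  else if s = ({1, 4, 5} : Finset (Fin 8)) then 1
  else if s = ({1, 6, 7} : Finset (Fin 8)) then 1
  else if s = ({2, 4, 6} : Finset (Fin 8)) then 1
  else if s = ({2, 5, 7} : Finset (Fin 8)) then -1
  else if s = ({3, 4, 7} : Finset (Fin 8)) then -1
  else if s = ({3, 5, 6} : Finset (Fin 8)) then -1
  else 0

/-- `*₇φ` on `V ⊂ ℝ⁸`, regarded as a 4-form on `ℝ⁸` annihilated by `i(e₀)`. -/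
def psi8 : Form K 8 := fun s =>
  if s = ({4, 5, 6, 7} : Finset (Fin 8)) then 1
  else if s = ({2, 3, 6, 7} : Finset (Fin 8)) then 1
  else if s = ({2, 3, 4, 5} : Finset (Fin 8)) then 1
  else if s = ({1, 3, 5, 7} : Finset (Fin 8)) then 1
  else if s = ({1, 3, 4, 6} : Finset (Fin 8)) then -1
  else if s = ({1, 2, 5, 6} : Finset (Fin 8)) then -1
  else if s = ({1, 2, 4, 7} : Finset (Fin 8)) then -1
  else 0

/-- The standard Cayley 4-form `Φ = e⁰ ∧ φ + *₇φ` on `ℝ⁸`. -/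
def Phi8 : Form K 8 := wedge (e1 0) phi8 + psi8

/-- The index set of `V = span{e₁, …, e₇} ⊂ ℝ⁸`. -/
def Vset : Finset (Fin 8) := {1, 2, 3, 4, 5, 6, 7}

/-- The Hodge star `*₇` of `V ⊂ ℝ⁸` (volume form `e^{1⋯7}`), acting on forms on `ℝ⁸`
annihilated by `i(e₀)`. -/
def star7 (α : Form K 8) : Form K 8 :=
  fun t => if (0 : Fin 8) ∈ t then 0 else signMerge (Vset \ t) t * α (Vset \ t)

/-- `α` is (the pullback of) a form on `V`, i.e. `i(e₀) α = 0`. -/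
def onV (α : Form K 8) : Prop := ∀ s, (0 : Fin 8) ∈ s → α s = 0

/-- `λ²(α) = ½ (e⁰ ∧ α + i(α♯) φ)` for `α ∈ V*`. -/
def lambda2 (α : Form K 8) : Form K 8 :=
  (2 : K)⁻¹ • (wedge (e1 0) α + iprod (sharp1 α) phi8)

/-- `λ⁴(α) = (1/√8) (e⁰ ∧ i(α♯) *₇φ − α ∧ φ)` for `α ∈ V*`. -/
def lambda4 (α : Form K 8) : Form K 8 :=
  (algebraMap ℝ K (Real.sqrt 8))⁻¹ • (wedge (e1 0) (iprod (sharp1 α) psi8) - wedge α phi8)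

/-- `λ⁶(α) = *₈ λ²(α)` for `α ∈ V*`. -/
def lambda6 (α : Form K 8) : Form K 8 := hstar (lambda2 α)

/-- The projection `π²₇(α) = (α + *₈(Φ ∧ α))/4` onto `Λ²₇`. -/
def pi27 (α : Form K 8) : Form K 8 := (4 : K)⁻¹ • (α + hstar (wedge Phi8 α))

/-- The projection `π⁴₇(β) = Σ_{μ=1}^{7} ⟨β, λ⁴(e^μ)⟩ λ⁴(e^μ)` onto `Λ⁴₇`. -/
def pi47 (β : Form K 8) : Form K 8 :=
  ∑ μ : Fin 7, inner' β (lambda4 (e1 μ.succ)) • lambda4 (e1 μ.succ)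

/-- `τ(u₀,u₁,u₂,u₃) = Σ_{μ=1}^{7} λ⁴(e^μ)(u₀,u₁,u₂,u₃) ⬝ λ⁴(e^μ) = π⁴₇(u₀♭∧u₁♭∧u₂♭∧u₃♭)`. -/
def tau4 (u : Fin 4 → (Fin 8 → K)) : Form K 8 :=
  ∑ μ : Fin 7, evalForm (lambda4 (e1 μ.succ)) u • lambda4 (e1 μ.succ)

/-- Partial derivative `∂f^a/∂x^j` at `x`. -/
def pd {m p : ℕ} (f : (Fin m → ℝ) → (Fin p → ℝ)) (x : Fin m → ℝ) (j : Fin m) (a : Fin p) : ℝ :=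
  fderiv ℝ f x (Pi.single j 1) a


lemma aux_eval {k n : ℕ} {ι : Type*} [Fintype ι] (f : ι → Fin k → Fin n)
    (hf : ∀ q, StrictMono (f q))
    (hinj : Function.Injective (fun q => Finset.univ.image (f q)))
    (α : Form ℝ n) (hα : ∀ s, s.card = k → α s ≠ 0 → ∃ q, Finset.univ.image (f q) = s)
    (v : Fin k → Fin n → ℝ) :
    evalForm α v = ∑ q, α (Finset.univ.image (f q)) * Matrix.det (Matrix.of fun i j => v i (f q j)) := by
  classical
  unfold evalForm
  have hcard : ∀ q, (Finset.univ.image (f q)).card = k := fun q => by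
    rw [Finset.card_image_of_injective _ (hf q).injective]; simp
  have hterm : ∀ q, α (Finset.univ.image (f q)) * Matrix.det (Matrix.of fun i j => v i (f q j))
      = (fun s : Finset (Fin n) => α s *
    (if h : s.card = k then
      Matrix.det (Matrix.of fun i j => v i ((s.orderIsoOfFin h j : Fin n))) else 0))
        (Finset.univ.image (f q)) := by
    intro q
    have h1 : f q = (Finset.univ.image (f q)).orderEmbOfFin (hcard q) :=
      Finset.orderEmbOfFin_unique (hcard q) (fun x => by simp) (hf q)
    simp only [hcard q, dite_true]
    congr 3
    funext i j
    rw [Finset.coe_orderIsoOfFin_apply, ← h1]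
  rw [Finset.sum_congr rfl (fun q _ => hterm q)]
  rw [← Finset.sum_image (s := Finset.univ) (g := fun q => Finset.univ.image (f q))
    (f := fun s : Finset (Fin n) => α s *
    (if h : s.card = k then
      Matrix.det (Matrix.of fun i j => v i ((s.orderIsoOfFin h j : Fin n))) else 0))
    (fun a _ b _ h => hinj h)]
  symm
  apply Finset.sum_subset (Finset.subset_univ _)
  intro s _ hs
  by_cases hc : s.card = k
  · by_cases h0 : α s = 0
    · simp [h0]
    · obtain ⟨q, hq⟩ := hα s hc h0
      exact absurd (Finset.mem_image.2 ⟨q, Finset.mem_univ _, hq⟩) hs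
  · simp [hc]

/-- Index quadruples of the Cayley form. -/
def quadT : Fin 14 → Fin 4 → Fin 8 :=
  ![![0,1,2,3], ![0,1,4,5], ![0,1,6,7], ![0,2,4,6], ![0,2,5,7], ![0,3,4,7], ![0,3,5,6],
    ![4,5,6,7], ![2,3,6,7], ![2,3,4,5], ![1,3,5,7], ![1,3,4,6], ![1,2,5,6], ![1,2,4,7]]

def quadS : Fin 14 → ℤ := ![1,1,1,1,-1,-1,-1,1,1,1,1,-1,-1,-1]

def PhiZ (s : Finset (Fin 8)) : ℤ :=
  if s.card = 4 then
    ∑ q, if Finset.univ.image (quadT q) = s then quadS q else 0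
  else 0

def phiZ (s : Finset (Fin 8)) : ℤ :=
  if s = ({1, 2, 3} : Finset (Fin 8)) then 1
  else if s = ({1, 4, 5} : Finset (Fin 8)) then 1
  else if s = ({1, 6, 7} : Finset (Fin 8)) then 1
  else if s = ({2, 4, 6} : Finset (Fin 8)) then 1
  else if s = ({2, 5, 7} : Finset (Fin 8)) then -1
  else if s = ({3, 4, 7} : Finset (Fin 8)) then -1
  else if s = ({3, 5, 6} : Finset (Fin 8)) then -1
  else 0

def psiZ (s : Finset (Fin 8)) : ℤ :=
  if s = ({4, 5, 6, 7} : Finset (Fin 8)) then 1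
  else if s = ({2, 3, 6, 7} : Finset (Fin 8)) then 1
  else if s = ({2, 3, 4, 5} : Finset (Fin 8)) then 1
  else if s = ({1, 3, 5, 7} : Finset (Fin 8)) then 1
  else if s = ({1, 3, 4, 6} : Finset (Fin 8)) then -1
  else if s = ({1, 2, 5, 6} : Finset (Fin 8)) then -1
  else if s = ({1, 2, 4, 7} : Finset (Fin 8)) then -1
  else 0

lemma PhiZ_eq : ∀ s : Finset (Fin 8),
    (if (0 : Fin 8) ∈ s then phiZ (s \ {0}) else 0) + psiZ s = PhiZ s := by
  decide +kernel

lemma Phi8_eq (s : Finset (Fin 8)) : (Phi8 : Form ℝ 8) s = (PhiZ s : ℝ) := by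
  rw [← PhiZ_eq s]
  have h1 : (phi8 : Form ℝ 8) = fun s => (phiZ s : ℝ) := by
    funext s; unfold phi8 phiZ; push_cast; rfl
  have h2 : (psi8 : Form ℝ 8) s = (psiZ s : ℝ) := by
    unfold psi8 psiZ; push_cast; rfl
  unfold Phi8
  rw [Pi.add_apply, h2, h1]
  push_cast
  congr 1
  unfold wedge e1
  by_cases h : (0 : Fin 8) ∈ s
  · rw [Finset.sum_eq_single {0}]
    · have : ((({0} : Finset (Fin 8)) ×ˢ (s \ {0})).filter (fun p => p.2 < p.1)) = ∅ := by
        ext ⟨a, b⟩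
        simp only [Finset.mem_filter, Finset.mem_product, Finset.mem_singleton,
          Finset.notMem_empty, iff_false]
        rintro ⟨⟨rfl, _⟩, hb⟩
        exact absurd hb (Fin.not_lt_zero b)
      have h7 : (signMerge ({0} : Finset (Fin 8)) (s \ {0}) : ℝ) = 1 := by
        unfold signMerge; rw [this]; simp
      rw [h7]; simp [h]
    · intro b _ hb
      simp [hb]
    · intro hn
      exact absurd (by simpa using h) hn
  · rw [Finset.sum_eq_zero]
    · simp [h]
    · intro b hb
      have : b ≠ {0} := by
        rintro rfl
        exact h (by simpa using hb)
      simp [this]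

lemma PhiZ_card (s : Finset (Fin 8)) (h : PhiZ s ≠ 0) : s.card = 4 := by
  by_contra hc
  exact h (by simp [PhiZ, hc])

lemma eval_Phi (v : Fin 4 → Fin 8 → ℝ) :
    evalForm Phi8 v = ∑ q, (quadS q : ℝ) * Matrix.det (Matrix.of fun i j => v i (quadT q j)) := by
  have hmono : ∀ q, StrictMono (quadT q) := by
    have : ∀ q : Fin 14, ∀ a b : Fin 4, a < b → quadT q a < quadT q b := by decide +kernel
    intro q a b; exact this q a b
  have hinj : Function.Injective (fun q => Finset.univ.image (quadT q)) := by
    have : ∀ a b : Fin 14, Finset.univ.image (quadT a) = Finset.univ.image (quadT b) → a = b := by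
      decide +kernel
    intro a b; exact this a b
  rw [aux_eval quadT hmono hinj]
  · refine Finset.sum_congr rfl fun q _ => ?_
    have : ∀ q, PhiZ (Finset.univ.image (quadT q)) = quadS q := by decide +kernel
    rw [Phi8_eq, this]
  · intro s hs h0
    rw [Phi8_eq] at h0
    by_contra hne
    push Not at hne
    apply h0
    simp [PhiZ, hne]

def m2 (α : Form ℝ 8) (i j : Fin 8) : ℝ :=
  if i < j then α {i, j} else if j < i then - α {i, j} else 0

abbrev Prs := {p : Fin 8 × Fin 8 // p.1 < p.2}

lemma m2_anti (α : Form ℝ 8) (i j : Fin 8) : m2 α j i = - m2 α i j := by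
  simp only [m2]
  rcases lt_trichotomy i j with h | h | h
  · simp [h, h.not_gt, Finset.pair_comm]
  · subst h; simp
  · simp [h, h.not_gt, Finset.pair_comm]

lemma m2_lt (α : Form ℝ 8) {i j : Fin 8} (h : i < j) : m2 α i j = α {i, j} := by
  simp [m2, h]

lemma sum_pairs (F : Fin 8 → Fin 8 → ℝ) :
    ∑ p : Prs, F p.1.1 p.1.2 = ∑ i, ∑ j, if i < j then F i j else 0 := by
  rw [← Fintype.sum_prod_type' (f := fun i j => if i < j then F i j else 0)]
  rw [← Finset.sum_filter]
  exact (Finset.sum_subtype (Finset.univ.filter fun p : Fin 8 × Fin 8 => p.1 < p.2)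
    (by simp) (fun p => F p.1 p.2)).symm

lemma pair_mono (p : Prs) : StrictMono (![p.1.1, p.1.2] : Fin 2 → Fin 8) := by
  intro a b h
  fin_cases a <;> fin_cases b <;> simp_all
  exact p.2

lemma pair_image (p : Prs) :
    Finset.univ.image (![p.1.1, p.1.2] : Fin 2 → Fin 8) = {p.1.1, p.1.2} := by
  ext x; simp [eq_comm]

lemma pair_inj : ∀ p q : Prs, ({p.1.1, p.1.2} : Finset (Fin 8)) = {q.1.1, q.1.2} → p = q := by
  rintro ⟨⟨a, b⟩, h⟩ ⟨⟨c, d⟩, h'⟩ he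
  simp only at h h' he
  have ha : a ∈ ({c, d} : Finset (Fin 8)) := he ▸ by simp
  have hb : b ∈ ({c, d} : Finset (Fin 8)) := he ▸ by simp
  have hc : c ∈ ({a, b} : Finset (Fin 8)) := he ▸ by simp
  simp only [Finset.mem_insert, Finset.mem_singleton] at ha hb hc
  have : a = c ∧ b = d := by omega
  simp [this.1, this.2]

lemma pair_ex (s : Finset (Fin 8)) (hs : s.card = 2) : ∃ p : Prs, ({p.1.1, p.1.2} : Finset (Fin 8)) = s := by
  obtain ⟨x, y, hxy, rfl⟩ := Finset.card_eq_two.1 hs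
  rcases lt_or_gt_of_ne hxy with h | h
  · exact ⟨⟨(x, y), h⟩, rfl⟩
  · exact ⟨⟨(y, x), h⟩, Finset.pair_comm _ _⟩

lemma eval_two (α : Form ℝ 8) (x y : Fin 8 → ℝ) :
    evalForm α ![x, y] = ∑ i, ∑ j, x i * m2 α i j * y j := by
  have h := aux_eval (fun p : Prs => (![p.1.1, p.1.2] : Fin 2 → Fin 8)) pair_mono
    (by intro p q h; simp only [pair_image] at h; exact pair_inj p q h) α
    (by intro s hs _; simp only [pair_image]; exact pair_ex s hs) ![x, y]
  rw [h]
  have h3 : ∀ p : Prs, α (Finset.univ.image (![p.1.1, p.1.2] : Fin 2 → Fin 8)) *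
      Matrix.det (Matrix.of fun i j => (![x, y] : Fin 2 → Fin 8 → ℝ) i ((![p.1.1, p.1.2] : Fin 2 → Fin 8) j))
      = (fun i j => m2 α i j * (x i * y j - x j * y i)) p.1.1 p.1.2 := by
    intro p
    rw [pair_image, Matrix.det_fin_two]
    simp only [m2_lt α p.2]
    simp
  rw [Finset.sum_congr rfl fun p _ => h3 p,
    sum_pairs (fun i j => m2 α i j * (x i * y j - x j * y i))]
  have hs : ∑ i, ∑ j, (if i < j then m2 α i j * (x i * y j - x j * y i) else 0)
      = (∑ i, ∑ j, if i < j then x i * m2 α i j * y j else 0)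
        + ∑ i, ∑ j, if i < j then x j * m2 α j i * y i else 0 := by
    simp only [← Finset.sum_add_distrib]
    refine Finset.sum_congr rfl fun i _ => Finset.sum_congr rfl fun j _ => ?_
    split_ifs
    · rw [m2_anti α i j]; ring
    · ring
  rw [hs, Finset.sum_comm (f := fun i j => if i < j then x j * m2 α j i * y i else 0)]
  simp only [← Finset.sum_add_distrib]
  refine Finset.sum_congr rfl fun i _ => Finset.sum_congr rfl fun j _ => ?_
  rcases lt_trichotomy i j with h | h | h
  · simp [h, h.not_gt]
  · subst h
    have := m2_anti α i i
    have : m2 α i i = 0 := by linarith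
    simp [this]
  · simp [h, h.not_gt]

lemma iprod_single (v : Fin 8 → ℝ) (α : Form ℝ 8) (j : Fin 8) :
    iprod v α {j} = ∑ i, v i * m2 α i j := by
  unfold iprod iprodB
  refine Finset.sum_congr rfl fun i _ => ?_
  congr 1
  simp only [m2, Finset.mem_singleton]
  rcases lt_trichotomy i j with h | h | h
  · simp [h, h.ne, Finset.filter_singleton, h.not_gt]
  · subst h; simp
  · simp [h, h.ne', Finset.filter_singleton, h.not_gt]

/-- The seven self-dual functionals. -/
def Lf (B : Fin 8 → Fin 8 → ℝ) : Fin 7 → ℝ :=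
  ![B 0 1 + B 2 3 + B 4 5 + B 6 7,
    B 0 2 - B 1 3 + B 4 6 - B 5 7,
    B 0 3 + B 1 2 - B 4 7 - B 5 6,
    B 0 4 - B 1 5 - B 2 6 + B 3 7,
    B 0 5 + B 1 4 + B 2 7 + B 3 6,
    B 0 6 - B 1 7 + B 2 4 - B 3 5,
    B 0 7 + B 1 6 - B 2 5 - B 3 4]

def wZ : Fin 7 → Fin 8 → Fin 8 → ℤ :=
  ![fun i j => if (i, j) = (0, 1) ∨ (i, j) = (2, 3) ∨ (i, j) = (4, 5) ∨ (i, j) = (6, 7) then 1 else 0,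
    fun i j => if (i, j) = (0, 2) ∨ (i, j) = (4, 6) then 1 else
      if (i, j) = (1, 3) ∨ (i, j) = (5, 7) then -1 else 0,
    fun i j => if (i, j) = (0, 3) ∨ (i, j) = (1, 2) then 1 else
      if (i, j) = (4, 7) ∨ (i, j) = (5, 6) then -1 else 0,
    fun i j => if (i, j) = (0, 4) ∨ (i, j) = (3, 7) then 1 else
      if (i, j) = (1, 5) ∨ (i, j) = (2, 6) then -1 else 0,
    fun i j => if (i, j) = (0, 5) ∨ (i, j) = (1, 4) ∨ (i, j) = (2, 7) ∨ (i, j) = (3, 6) then 1 else 0,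
    fun i j => if (i, j) = (0, 6) ∨ (i, j) = (2, 4) then 1 else
      if (i, j) = (1, 7) ∨ (i, j) = (3, 5) then -1 else 0,
    fun i j => if (i, j) = (0, 7) ∨ (i, j) = (1, 6) then 1 else
      if (i, j) = (2, 5) ∨ (i, j) = (3, 4) then -1 else 0]

lemma wZ_sum (B : Fin 8 → Fin 8 → ℝ) (μ : Fin 7) :
    Lf B μ = ∑ i, ∑ j, (wZ μ i j : ℝ) * B i j := by
  fin_cases μ <;> simp [Lf, wZ, Fin.sum_univ_eight] <;> ring

def sgZ (s t : Finset (Fin 8)) : ℤ := (-1) ^ (((s ×ˢ t).filter (fun p => p.2 < p.1)).card)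

lemma sgZ_eq (s t : Finset (Fin 8)) : (signMerge s t : ℝ) = (sgZ s t : ℝ) := by
  simp [signMerge, sgZ]

def MZ (t r : Finset (Fin 8)) : ℤ :=
  if r ⊆ tᶜ then sgZ tᶜ t * (sgZ (tᶜ \ r) r * PhiZ (tᶜ \ r)) else 0

lemma star_eq (α : Form ℝ 8) (t : Finset (Fin 8)) :
    hstar (wedge Phi8 α) t = ∑ r, (MZ t r : ℝ) * α r := by
  unfold hstar wedge
  rw [Finset.mul_sum]
  have : ∀ r, (MZ t r : ℝ) * α r = if r ∈ tᶜ.powerset then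
      (sgZ tᶜ t * (sgZ (tᶜ \ r) r * PhiZ (tᶜ \ r)) : ℝ) * α r else 0 := by
    intro r
    simp only [Finset.mem_powerset]
    unfold MZ
    split_ifs <;> simp
  rw [Finset.sum_congr rfl fun r _ => this r, Finset.sum_ite_mem, Finset.univ_inter]
  refine Finset.sum_nbij' (fun s => tᶜ \ s) (fun s => tᶜ \ s) ?_ ?_ ?_ ?_ ?_
  · intro s _; simp
  · intro s _; simp
  · intro s hs; exact Finset.sdiff_sdiff_eq_self (Finset.mem_powerset.1 hs)
  · intro s hs; exact Finset.sdiff_sdiff_eq_self (Finset.mem_powerset.1 hs)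
  · intro s hs
    rw [Finset.sdiff_sdiff_eq_self (Finset.mem_powerset.1 hs), sgZ_eq, sgZ_eq, Phi8_eq]
    ring

lemma MZ_key : ∀ p q : Prs, (if p = q then 1 else 0) + MZ {p.1.1, p.1.2} {q.1.1, q.1.2} =
    ∑ μ, wZ μ p.1.1 p.1.2 * wZ μ q.1.1 q.1.2 := by
  decide +kernel

lemma sum_grade (α : Form ℝ 8) (h2 : isGrade 2 α) (F : Finset (Fin 8) → ℝ) :
    ∑ r, F r * α r = ∑ p : Prs, F {p.1.1, p.1.2} * α {p.1.1, p.1.2} := by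
  rw [← Finset.sum_image (s := (Finset.univ : Finset Prs))
    (g := fun p : Prs => ({p.1.1, p.1.2} : Finset (Fin 8)))
    (f := fun s => F s * α s) (fun a _ b _ h => pair_inj a b h)]
  symm
  apply Finset.sum_subset (Finset.subset_univ _)
  intro s _ hs
  by_cases hc : s.card = 2
  · obtain ⟨q, hq⟩ := pair_ex s hc
    exact absurd (Finset.mem_image.2 ⟨q, Finset.mem_univ _, hq⟩) hs
  · simp [h2 s hc]

lemma wZ_supp : ∀ (μ : Fin 7) (i j : Fin 8), ¬ i < j → wZ μ i j = 0 := by decide +kernel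

lemma Lf_pairs (α : Form ℝ 8) (μ : Fin 7) :
    Lf (m2 α) μ = ∑ p : Prs, (wZ μ p.1.1 p.1.2 : ℝ) * α {p.1.1, p.1.2} := by
  rw [wZ_sum]
  have : ∀ p : Prs, (wZ μ p.1.1 p.1.2 : ℝ) * α {p.1.1, p.1.2} =
      (fun i j => (wZ μ i j : ℝ) * m2 α i j) p.1.1 p.1.2 := by
    intro p; simp only [m2_lt α p.2]
  rw [Finset.sum_congr rfl fun p _ => this p,
    sum_pairs (fun i j => (wZ μ i j : ℝ) * m2 α i j)]
  refine Finset.sum_congr rfl fun i _ => Finset.sum_congr rfl fun j _ => ?_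
  split_ifs with h
  · rfl
  · simp [wZ_supp μ i j h]

lemma pi27_pair (α : Form ℝ 8) (h2 : isGrade 2 α) (p : Prs) :
    pi27 α {p.1.1, p.1.2} = 4⁻¹ * ∑ μ, (wZ μ p.1.1 p.1.2 : ℝ) * Lf (m2 α) μ := by
  simp only [pi27, Pi.smul_apply, Pi.add_apply, smul_eq_mul]
  congr 1
  rw [star_eq, sum_grade α h2]
  simp only [Lf_pairs, Finset.mul_sum]
  rw [Finset.sum_comm]
  have h : ∀ q : Prs, ∑ μ, (wZ μ p.1.1 p.1.2 : ℝ) * ((wZ μ q.1.1 q.1.2 : ℝ) * α {q.1.1, q.1.2})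
      = (if p = q then α {q.1.1, q.1.2} else 0)
        + (MZ {p.1.1, p.1.2} {q.1.1, q.1.2} : ℝ) * α {q.1.1, q.1.2} := by
    intro q
    have := congrArg (Int.cast : ℤ → ℝ) (MZ_key p q)
    push_cast at this
    simp only [← mul_assoc]
    rw [← Finset.sum_mul, ← this]
    split_ifs <;> ring
  rw [Finset.sum_congr rfl fun q _ => h q, Finset.sum_add_distrib]
  simp

lemma pi27_off (α : Form ℝ 8) (h2 : isGrade 2 α) (t : Finset (Fin 8)) (ht : t.card ≠ 2) :
    pi27 α t = 0 := by
  simp only [pi27, Pi.smul_apply, Pi.add_apply, smul_eq_mul]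
  rw [h2 t ht, star_eq, Finset.sum_eq_zero]
  · simp
  intro r _
  by_cases hr : r.card = 2
  · have : MZ t r = 0 := by
      unfold MZ
      split_ifs with hs
      · by_cases h0 : PhiZ (tᶜ \ r) = 0
        · simp [h0]
        · have h4 := PhiZ_card _ h0
          have h5 := Finset.card_sdiff_add_card_eq_card hs
          have h6 := Finset.card_compl_add_card t
          simp only [Fintype.card_fin] at h6
          omega
      · rfl
    simp [this]
  · simp [h2 r hr]

lemma pi27_iff (α : Form ℝ 8) (h2 : isGrade 2 α) :
    pi27 α = 0 ↔ ∀ μ, Lf (m2 α) μ = 0 := by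
  constructor
  · intro h μ
    have h1 := pi27_pair α h2 ⟨(0, μ.succ), Fin.succ_pos μ⟩
    rw [h] at h1
    have h3 : ∀ μ ν : Fin 7, wZ ν 0 μ.succ = if ν = μ then 1 else 0 := by decide +kernel
    simp only [h3] at h1
    simp at h1
    exact h1
  · intro h
    funext t
    by_cases ht : t.card = 2
    · obtain ⟨p, rfl⟩ := pair_ex t ht
      rw [pi27_pair α h2]
      simp [h]
    · exact pi27_off α h2 t ht

/-- The two-fold cross product. -/
def Pc (x y : Fin 8 → ℝ) : Fin 7 → ℝ := Lf (fun k l => x k * y l - x l * y k)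

def D4 (a b c d : Fin 8 → ℝ) (i j k l : Fin 8) : ℝ :=
    a i * b j * c k * d l
    - a i * b j * c l * d k
    - a i * b k * c j * d l
    + a i * b k * c l * d j
    + a i * b l * c j * d k
    - a i * b l * c k * d j
    - a j * b i * c k * d l
    + a j * b i * c l * d k
    + a j * b k * c i * d l
    - a j * b k * c l * d i
    - a j * b l * c i * d k
    + a j * b l * c k * d i
    + a k * b i * c j * d l
    - a k * b i * c l * d j
    - a k * b j * c i * d l
    + a k * b j * c l * d i
    + a k * b l * c i * d j
    - a k * b l * c j * d i
    - a l * b i * c j * d k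
    + a l * b i * c k * d j
    + a l * b j * c i * d k
    - a l * b j * c k * d i
    - a l * b k * c i * d j
    + a l * b k * c j * d i

lemma det4 (a b c d : Fin 8 → ℝ) (f : Fin 4 → Fin 8) :
    Matrix.det (Matrix.of fun i j => (![a, b, c, d] : Fin 4 → Fin 8 → ℝ) i (f j)) =
      D4 a b c d (f 0) (f 1) (f 2) (f 3) := by
  simp [Matrix.det_succ_row_zero, Fin.sum_univ_succ, Fin.succAbove]
  unfold D4
  ring

set_option maxHeartbeats 4000000 in
lemma Pc_inner (a b c d : Fin 8 → ℝ) :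
    ∑ μ, Pc a b μ * Pc c d μ = (∑ k, a k * c k) * (∑ k, b k * d k)
      - (∑ k, a k * d k) * (∑ k, b k * c k) + evalForm Phi8 ![a, b, c, d] := by
  rw [eval_Phi]
  simp only [det4]
  have h14 : ∀ F : Fin 14 → ℝ, ∑ q, F q = F 0 + F 1 + F 2 + F 3 + F 4 + F 5 + F 6 + F 7 + F 8
      + F 9 + F 10 + F 11 + F 12 + F 13 := by
    intro F; simp only [Fin.sum_univ_castSucc, Finset.univ_eq_empty, Finset.sum_empty, zero_add]
    rfl
  rw [h14]
  simp only [Fin.sum_univ_seven, Fin.sum_univ_eight]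
  simp [quadS, quadT, Pc, Lf]
  unfold D4
  ring

lemma Phi_rep {v : Fin 4 → Fin 8 → ℝ} (i j : Fin 4) (hij : i ≠ j) (h : v i = v j) :
    evalForm Phi8 v = 0 := by
  rw [eval_Phi]
  refine Finset.sum_eq_zero fun q _ => ?_
  rw [Matrix.det_zero_of_row_eq hij]
  · simp
  · funext k; simp [h]

lemma Phi_cyc (a b c d : Fin 8 → ℝ) :
    evalForm Phi8 ![a, c, d, b] = evalForm Phi8 ![a, b, c, d] := by
  rw [eval_Phi, eval_Phi]
  refine Finset.sum_congr rfl fun q _ => ?_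
  congr 1
  simp [Matrix.det_succ_row_zero, Fin.sum_univ_succ, Fin.succAbove]
  ring

lemma Lf_expand (A : Fin 8 → Fin 8 → ℝ) (u : Fin 4 → Fin 8 → ℝ) (a01 a02 a03 a12 a31 a23 : ℝ)
    (hA : ∀ k l, A k l = a01 * (u 0 k * u 1 l - u 0 l * u 1 k)
      + a02 * (u 0 k * u 2 l - u 0 l * u 2 k) + a03 * (u 0 k * u 3 l - u 0 l * u 3 k)
      + a12 * (u 1 k * u 2 l - u 1 l * u 2 k) + a31 * (u 3 k * u 1 l - u 3 l * u 1 k)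
      + a23 * (u 2 k * u 3 l - u 2 l * u 3 k)) (μ : Fin 7) :
    Lf A μ = a01 * Pc (u 0) (u 1) μ + a02 * Pc (u 0) (u 2) μ + a03 * Pc (u 0) (u 3) μ
      + a12 * Pc (u 1) (u 2) μ + a31 * Pc (u 3) (u 1) μ + a23 * Pc (u 2) (u 3) μ := by
  simp only [Pc, wZ_sum, Finset.mul_sum, ← Finset.sum_add_distrib]
  refine Finset.sum_congr rfl fun i _ => Finset.sum_congr rfl fun j _ => ?_
  rw [hA]; ring

lemma eq_of_inner (p q : Fin 7 → ℝ) (h1 : ∑ μ, p μ * p μ = 1) (h2 : ∑ μ, q μ * q μ = 1)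
    (h3 : ∑ μ, p μ * q μ = 1) : q = p := by
  have h : ∑ μ, (q μ - p μ) ^ 2 = 0 := by
    have : ∀ μ, (q μ - p μ) ^ 2 = q μ * q μ - 2 * (p μ * q μ) + p μ * p μ := fun μ => by ring
    simp only [this, Finset.sum_add_distrib, Finset.sum_sub_distrib, ← Finset.mul_sum, h1, h2, h3]
    norm_num
  rw [Finset.sum_eq_zero_iff_of_nonneg (fun _ _ => sq_nonneg _)] at h
  funext μ
  have := h μ (Finset.mem_univ _)
  have := pow_eq_zero_iff (two_ne_zero) |>.1 this
  linarith

lemma m2_expand (u : Fin 4 → (Fin 8 → ℝ))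
    (hu : ∀ i j, (∑ k, u i k * u j k) = if i = j then (1 : ℝ) else 0)
    (α : Form ℝ 8)
    (hU : ∀ v : Fin 8 → ℝ, (∀ i, ∑ k, v k * u i k = 0) → iprod v α = 0) (k l : Fin 8) :
    m2 α k l = ∑ i, ∑ j, u i k * u j l * evalForm α ![u i, u j] := by
  have h1 : ∀ k l, m2 α k l = ∑ i, u i k * ∑ m, u i m * m2 α m l := by
    intro k l
    have hv := hU (fun m => (if m = k then 1 else 0) - ∑ i, u i k * u i m) (by
      intro i
      simp only [sub_mul, Finset.sum_sub_distrib, Finset.sum_mul]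
      rw [Finset.sum_comm]
      simp only [mul_assoc, ← Finset.mul_sum, hu]
      simp)
    have hv2 := congrFun hv {l}
    rw [iprod_single] at hv2
    simp only [sub_mul, Finset.sum_sub_distrib, Finset.sum_mul] at hv2
    rw [Finset.sum_comm] at hv2
    simp only [mul_assoc, ← Finset.mul_sum] at hv2
    simp at hv2
    linarith
  have h2 : ∀ m l, m2 α m l = ∑ j, u j l * ∑ n, m2 α m n * u j n := by
    intro m l
    rw [m2_anti, h1 l m, ← Finset.sum_neg_distrib]
    refine Finset.sum_congr rfl fun j _ => ?_
    rw [← mul_neg, ← Finset.sum_neg_distrib]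
    congr 1
    refine Finset.sum_congr rfl fun n _ => ?_
    rw [m2_anti α m n]; ring
  rw [h1]
  refine Finset.sum_congr rfl fun i _ => ?_
  have h4 : ∑ m, u i m * m2 α m l = ∑ j, u j l * evalForm α ![u i, u j] := by
    simp only [eval_two]
    rw [Finset.sum_congr rfl fun m _ => by rw [h2 m l]]
    simp only [Finset.mul_sum]
    rw [Finset.sum_comm]
    refine Finset.sum_congr rfl fun j _ => Finset.sum_congr rfl fun m _ =>
      Finset.sum_congr rfl fun n _ => ?_
    ring
  rw [h4, Finset.mul_sum]
  refine Finset.sum_congr rfl fun j _ => ?_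
  ring

lemma eval_anti (α : Form ℝ 8) (x y : Fin 8 → ℝ) :
    evalForm α ![y, x] = - evalForm α ![x, y] := by
  rw [eval_two, eval_two, Finset.sum_comm, ← Finset.sum_neg_distrib]
  refine Finset.sum_congr rfl fun i _ => ?_
  rw [← Finset.sum_neg_distrib]
  refine Finset.sum_congr rfl fun j _ => ?_
  rw [m2_anti α i j]; ring

/-- Lemma 5.8.  Let `U ⊂ ℝ⁸` be a Cayley subspace with positively
oriented orthonormal basis `(u₀,u₁,u₂,u₃)` (so `Φ(u₀,u₁,u₂,u₃) = 1`), and let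
`α ∈ Λ²U* = {α : i(v)α = 0 for v ⊥ U}`.  Then `α` is anti-self-dual on `U` (with respect
to the induced metric and this orientation) if and only if `π²₇(α) = 0`. -/
theorem statement12 (u : Fin 4 → (Fin 8 → ℝ))
    (hu : ∀ i j, (∑ k, u i k * u j k) = if i = j then (1 : ℝ) else 0)
    (hCayley : evalForm Phi8 u = 1)
    (α : Form ℝ 8) (h2 : isGrade 2 α)
    (hU : ∀ v : Fin 8 → ℝ, (∀ i, ∑ k, v k * u i k = 0) → iprod v α = 0) :
    (evalForm α ![u 0, u 1] + evalForm α ![u 2, u 3] = 0 ∧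
     evalForm α ![u 0, u 2] + evalForm α ![u 3, u 1] = 0 ∧
     evalForm α ![u 0, u 3] + evalForm α ![u 1, u 2] = 0) ↔
    pi27 α = 0 := by
  rw [pi27_iff α h2]
  have hu4 : u = ![u 0, u 1, u 2, u 3] := by
    funext i; fin_cases i <;> rfl
  have hC : evalForm Phi8 ![u 0, u 1, u 2, u 3] = 1 := by rw [← hu4]; exact hCayley
  have hC2 : evalForm Phi8 ![u 0, u 2, u 3, u 1] = 1 := by rw [Phi_cyc]; exact hC
  have hC3 : evalForm Phi8 ![u 0, u 3, u 1, u 2] = 1 := by rw [Phi_cyc]; exact hC2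
  have hR : ∀ a b d : Fin 8 → ℝ, evalForm Phi8 ![a, b, a, d] = 0 := fun a b d =>
    Phi_rep 0 2 (by decide) rfl
  have nrm : ∀ i j, i ≠ j → ∑ μ, Pc (u i) (u j) μ * Pc (u i) (u j) μ = 1 := by
    intro i j hij
    rw [Pc_inner, hR]
    simp [hu, hij]
  have ort : ∀ i j k, i ≠ j → i ≠ k → j ≠ k → ∑ μ, Pc (u i) (u j) μ * Pc (u i) (u k) μ = 0 := by
    intro i j k hij hik hjk
    rw [Pc_inner, hR]
    simp [hu, hij, hik, hjk]
  have e1 : Pc (u 2) (u 3) = Pc (u 0) (u 1) :=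
    eq_of_inner _ _ (nrm _ _ (by decide)) (nrm _ _ (by decide)) (by
      rw [Pc_inner, hC]; simp [hu])
  have e2 : Pc (u 3) (u 1) = Pc (u 0) (u 2) :=
    eq_of_inner _ _ (nrm _ _ (by decide)) (nrm _ _ (by decide)) (by
      rw [Pc_inner, hC2]; simp [hu])
  have e3 : Pc (u 1) (u 2) = Pc (u 0) (u 3) :=
    eq_of_inner _ _ (nrm _ _ (by decide)) (nrm _ _ (by decide)) (by
      rw [Pc_inner, hC3]; simp [hu])
  have hdiag : ∀ i, evalForm α ![u i, u i] = 0 := fun i => by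
    have := eval_anti α (u i) (u i); linarith
  have hL := Lf_expand (m2 α) u (evalForm α ![u 0, u 1]) (evalForm α ![u 0, u 2])
    (evalForm α ![u 0, u 3]) (evalForm α ![u 1, u 2]) (evalForm α ![u 3, u 1])
    (evalForm α ![u 2, u 3]) (by
      intro k l
      rw [m2_expand u hu α hU k l]
      simp only [Fin.sum_univ_four, hdiag]
      rw [eval_anti α (u 0) (u 1), eval_anti α (u 0) (u 2), eval_anti α (u 0) (u 3),
        eval_anti α (u 1) (u 2), eval_anti α (u 3) (u 1), eval_anti α (u 2) (u 3)]
      ring)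
  generalize evalForm α ![u 0, u 1] = a01 at *
  generalize evalForm α ![u 0, u 2] = a02 at *
  generalize evalForm α ![u 0, u 3] = a03 at *
  generalize evalForm α ![u 1, u 2] = a12 at *
  generalize evalForm α ![u 3, u 1] = a31 at *
  generalize evalForm α ![u 2, u 3] = a23 at *
  rw [e1, e2, e3] at hL
  have hL' : ∀ μ, Lf (m2 α) μ = (a01 + a23) * Pc (u 0) (u 1) μ + (a02 + a31) * Pc (u 0) (u 2) μ
      + (a03 + a12) * Pc (u 0) (u 3) μ := fun μ => by rw [hL]; ring
  constructor
  · rintro ⟨h1, h2, h3⟩ μ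
    rw [hL', h1, h2, h3]; ring
  · intro h
    simp only [hL'] at h
    have key : ∀ j, (a01 + a23) * ∑ μ, Pc (u 0) (u 1) μ * Pc (u 0) (u j) μ
        + (a02 + a31) * ∑ μ, Pc (u 0) (u 2) μ * Pc (u 0) (u j) μ
        + (a03 + a12) * ∑ μ, Pc (u 0) (u 3) μ * Pc (u 0) (u j) μ = 0 := by
      intro j
      simp only [Finset.mul_sum, ← Finset.sum_add_distrib]
      refine Finset.sum_eq_zero fun μ _ => ?_
      linear_combination (Pc (u 0) (u j) μ) * h μ
    have k1 := key 1
    have k2 := key 2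
    have k3 := key 3
    rw [nrm 0 1 (by decide), ort 0 2 1 (by decide) (by decide) (by decide),
      ort 0 3 1 (by decide) (by decide) (by decide)] at k1
    rw [nrm 0 2 (by decide), ort 0 1 2 (by decide) (by decide) (by decide),
      ort 0 3 2 (by decide) (by decide) (by decide)] at k2
    rw [nrm 0 3 (by decide), ort 0 1 3 (by decide) (by decide) (by decide),
      ort 0 2 3 (by decide) (by decide) (by decide)] at k3
    refine ⟨by linarith, by linarith, by linarith⟩

end FMpaper
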